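/- The function φ_NLS belongs to N_NLS (that is, ∫ |φ_NLS|² dx = 2α), its energy satisfies E_NLS(φ_NLS) = c_NLS, and every ψ ∈ N_NLS satisfies E_NLS(ψ) ≥ c_NLS. Consequently c_NLS = inf{ E_NLS(ψ) : ψ ∈ N_NLS } and the infimum is attained at φ_NLS. -/

import Mathlib

open MeasureTheory

noncomputable def sech (x : ℝ) : ℝ := 1 / Real.cosh x

/-- `H1PairC ψ ψ'` expresses that `ψ` belongs to `H¹(ℝ;ℂ)` with weak derivative `ψ'`:
`ψ` is continuous and square-integrable, `ψ'` is square-integrable, and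
`ψ b - ψ a = ∫ₐᵇ ψ'` for all `a ≤ b`. -/
def H1PairC (ψ ψ' : ℝ → ℂ) : Prop :=
  Continuous ψ ∧ Integrable (fun x => ‖ψ x‖ ^ 2) ∧ Integrable (fun x => ‖ψ' x‖ ^ 2) ∧
    ∀ a b : ℝ, a ≤ b → ψ b - ψ a = ∫ t in a..b, ψ' t

/-- The nonlinear Schrödinger energy `E_NLS(ψ) = ∫ ((g₂/8)|ψ'|² + (3/8)A|ψ|⁴) dx`. -/
noncomputable def ENLS (g₂ A : ℝ) (ψ ψ' : ℝ → ℂ) : ℝ :=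
  ∫ x : ℝ, (g₂ / 8 * ‖ψ' x‖ ^ 2 + (3 / 8) * A * ‖ψ x‖ ^ 4)

/-!
The lower bound comes from completing a square. Let `ψ ∈ H¹` have mass `M = ∫ |ψ|²`, and let `F` be
the primitive of `|ψ|²` running from `-M/2` to `M/2`. Integration by parts gives
`∫ 2 F ⟪ψ, ψ'⟫ = -∫ |ψ|⁴`, and `∫ F² |ψ|² = M³/12` because the integrand is `(F³/3)'`. Hence
`0 ≤ ∫ |ψ' + κ F ψ|² = ∫ |ψ'|² - κ ∫ |ψ|⁴ + κ² M³/12` for every real `κ`, and `κ = -3A/g₂` is the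
asserted bound. The square vanishes exactly when `ψ' = -κ F ψ`, which the `sech` profile solves.
-/

open Filter Topology Set Function
open scoped RealInnerProductSpace

section IndefiniteIntegral

variable {E : Type*} [NormedAddCommGroup E] [NormedSpace ℝ E] {f f' : ℝ → E}

/-- `f` is an indefinite integral of the locally integrable function `f'`, that is, `f` is locally
absolutely continuous and has weak derivative `f'`. -/
structure IsIndefiniteIntegral (f f' : ℝ → E) : Prop where
  locallyIntegrable : LocallyIntegrable f'
  sub_eq_integral : ∀ a b, f b - f a = ∫ t in a..b, f' t

lemma absolutelyContinuousOnInterval_of_dist_le {X Y : Type*} [PseudoMetricSpace X]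
    [PseudoMetricSpace Y] {u : ℝ → X} {v : ℝ → Y} {a b : ℝ}
    (hv : AbsolutelyContinuousOnInterval v a b) (huv : ∀ x y, dist (u x) (u y) ≤ dist (v x) (v y)) :
    AbsolutelyContinuousOnInterval u a b :=
  squeeze_zero (fun _ => Finset.sum_nonneg fun _ _ => dist_nonneg)
    (fun _ => Finset.sum_le_sum fun _ _ => huv _ _) hv

namespace IsIndefiniteIntegral

lemma intervalIntegrable (hf : IsIndefiniteIntegral f f') (a b : ℝ) :
    IntervalIntegrable f' volume a b :=
  (hf.locallyIntegrable.integrableOn_isCompact isCompact_uIcc).intervalIntegrable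

lemma eq_add_integral (hf : IsIndefiniteIntegral f f') (a x : ℝ) :
    f x = f a + ∫ t in a..x, f' t := by
  rw [← hf.sub_eq_integral, add_sub_cancel]

lemma continuous (hf : IsIndefiniteIntegral f f') : Continuous f := by
  rw [funext (hf.eq_add_integral 0)]
  exact continuous_const.add (intervalIntegral.continuous_primitive hf.intervalIntegrable 0)

lemma ae_hasDerivAt [CompleteSpace E] (hf : IsIndefiniteIntegral f f') :
    ∀ᵐ x, HasDerivAt f (f' x) x := by
  filter_upwards [_root_.LocallyIntegrable.ae_hasDerivAt_integral hf.locallyIntegrable] with x hx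
  rw [funext (hf.eq_add_integral 0)]
  exact (hx 0).const_add (f 0)

lemma absolutelyContinuousOnInterval (hf : IsIndefiniteIntegral f f') (a b : ℝ) :
    AbsolutelyContinuousOnInterval f a b := by
  have hnorm (x y : ℝ) : IntervalIntegrable (fun t => ‖f' t‖) volume x y :=
    (hf.intervalIntegrable x y).norm
  refine absolutelyContinuousOnInterval_of_dist_le
    ((hnorm a b).absolutelyContinuousOnInterval_intervalIntegral left_mem_uIcc) fun x y => ?_
  rw [dist_comm (f x), dist_comm (∫ t in a..x, _), dist_eq_norm, Real.dist_eq,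
    hf.sub_eq_integral, intervalIntegral.integral_interval_sub_left (hnorm a y) (hnorm a x)]
  exact intervalIntegral.norm_integral_le_abs_integral_norm

lemma exists_norm_le (hf : IsIndefiniteIntegral f f') (hf' : Integrable f') :
    ∃ C, ∀ x, ‖f x‖ ≤ C := by
  refine ⟨‖f 0‖ + ∫ t, ‖f' t‖, fun x => ?_⟩
  rw [hf.eq_add_integral 0 x]
  have hint : ‖∫ t in (0 : ℝ)..x, f' t‖ ≤ ∫ t, ‖f' t‖ :=
    intervalIntegral.norm_integral_le_integral_norm_uIoc.trans
      (setIntegral_le_integral hf'.norm (Eventually.of_forall fun _ => norm_nonneg _))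
  exact (norm_add_le _ _).trans (by gcongr)

lemma integral_eq_zero (hf : IsIndefiniteIntegral f f') (hfi : Integrable f)
    (hf' : Integrable f') : ∫ x, f' x = 0 := by
  have hlim : Tendsto (fun x => f x - f (-x)) atTop (𝓝 (∫ x, f' x)) := by
    simp only [hf.sub_eq_integral]
    exact intervalIntegral_tendsto_integral hf' tendsto_neg_atTop_atBot tendsto_id
  refine ((hfi.sub hfi.comp_neg).integrableAtFilter atTop).eq_zero_of_tendsto (fun s hs => ?_) hlim
  obtain ⟨b, hb⟩ := mem_atTop_sets.1 hs
  exact top_le_iff.1 (Real.volume_Ici (a := b) ▸ measure_mono hb)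

end IsIndefiniteIntegral

lemma isIndefiniteIntegral_of_absolutelyContinuous {u u' : ℝ → ℝ}
    (hu : ∀ a b, AbsolutelyContinuousOnInterval u a b) (hu' : ∀ᵐ x, HasDerivAt u (u' x) x) :
    IsIndefiniteIntegral u u' := by
  have hderiv : deriv u =ᵐ[volume] u' := hu'.mono fun _ hx => hx.deriv
  refine ⟨fun x => ⟨Ioc (x - 1) (x + 1), Ioc_mem_nhds (by linarith) (by linarith), ?_⟩,
    fun a b => ?_⟩
  · exact (hu (x - 1) (x + 1)).intervalIntegrable_deriv.1.congr_fun_ae (ae_restrict_of_ae hderiv)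
  · rw [← (hu a b).integral_deriv_eq_sub]
    exact intervalIntegral.integral_congr_ae (hderiv.mono fun _ hx _ => hx)

lemma IsIndefiniteIntegral.mul {u u' v v' : ℝ → ℝ} (hu : IsIndefiniteIntegral u u')
    (hv : IsIndefiniteIntegral v v') :
    IsIndefiniteIntegral (fun x => u x * v x) (fun x => u' x * v x + u x * v' x) := by
  refine isIndefiniteIntegral_of_absolutelyContinuous (fun a b =>
    (hu.absolutelyContinuousOnInterval a b).mul (hv.absolutelyContinuousOnInterval a b)) ?_
  filter_upwards [hu.ae_hasDerivAt, hv.ae_hasDerivAt] with x hux hvx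
  exact hux.mul hvx

end IndefiniteIntegral

section CenteredPrimitive

variable {ρ : ℝ → ℝ}

/-- The primitive of `ρ` with opposite limits `∓(∫ ρ) / 2` at `∓∞`. For a soliton density it is a
multiple of `tanh`. -/
noncomputable def centeredPrimitive (ρ : ℝ → ℝ) (x : ℝ) : ℝ :=
  (∫ t in Iic x, ρ t) - (∫ t, ρ t) / 2

lemma isIndefiniteIntegral_centeredPrimitive (hρ : Integrable ρ) :
    IsIndefiniteIntegral (centeredPrimitive ρ) ρ where
  locallyIntegrable := hρ.locallyIntegrable
  sub_eq_integral a b := by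
    rw [centeredPrimitive, centeredPrimitive, sub_sub_sub_cancel_right,
      intervalIntegral.integral_Iic_sub_Iic hρ.integrableOn hρ.integrableOn]

lemma hasDerivAt_centeredPrimitive (hρ : Integrable ρ) (hρc : Continuous ρ) (x : ℝ) :
    HasDerivAt (centeredPrimitive ρ) (ρ x) x := by
  rw [funext ((isIndefiniteIntegral_centeredPrimitive hρ).eq_add_integral 0)]
  exact (hρc.integral_hasStrictDerivAt 0 x).hasDerivAt.const_add _

lemma tendsto_centeredPrimitive_atBot (ρ : ℝ → ℝ) :
    Tendsto (centeredPrimitive ρ) atBot (𝓝 (-((∫ t, ρ t) / 2))) := by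
  rw [← zero_sub]
  exact (tendsto_integral_Iic_zero tendsto_id).sub_const _

lemma tendsto_centeredPrimitive_atTop (hρ : Integrable ρ) :
    Tendsto (centeredPrimitive ρ) atTop (𝓝 ((∫ t, ρ t) / 2)) := by
  rw [← sub_half (∫ t, ρ t)]
  exact ((aecover_Iic tendsto_id).integral_tendsto_of_countably_generated hρ).sub_const _

lemma integrable_centeredPrimitive_mul {g : ℝ → ℝ} (hρ : Integrable ρ) (hg : Integrable g) :
    Integrable fun x => centeredPrimitive ρ x * g x := by
  have hF := isIndefiniteIntegral_centeredPrimitive hρ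
  obtain ⟨C, hC⟩ := hF.exists_norm_le hρ
  exact hg.bdd_mul hF.continuous.aestronglyMeasurable (Eventually.of_forall hC)

lemma integrable_centeredPrimitive_sq_mul (hρ : Integrable ρ) :
    Integrable fun x => centeredPrimitive ρ x ^ 2 * ρ x := by
  simpa only [sq, mul_assoc] using
    integrable_centeredPrimitive_mul hρ (integrable_centeredPrimitive_mul hρ hρ)

lemma integral_centeredPrimitive_sq_mul (hρ : Integrable ρ) (hρc : Continuous ρ) :
    ∫ x, centeredPrimitive ρ x ^ 2 * ρ x = (∫ x, ρ x) ^ 3 / 12 := by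
  have hcube (x : ℝ) : HasDerivAt (fun y => centeredPrimitive ρ y ^ 3 / 3)
      (centeredPrimitive ρ x ^ 2 * ρ x) x :=
    (((hasDerivAt_centeredPrimitive hρ hρc x).pow 3).div_const 3).congr_deriv (by simp; ring)
  rw [integral_of_hasDerivAt_of_tendsto hcube (integrable_centeredPrimitive_sq_mul hρ)
    (((tendsto_centeredPrimitive_atBot ρ).pow 3).div_const 3)
    (((tendsto_centeredPrimitive_atTop hρ).pow 3).div_const 3)]
  ring

end CenteredPrimitive

section GagliardoNirenberg

variable {E : Type*} [NormedAddCommGroup E] [InnerProductSpace ℝ E] {f f' : ℝ → E}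

lemma integrable_inner_of_memLp_two {Ω : Type*} [MeasurableSpace Ω] {μ : Measure Ω} {u v : Ω → E}
    (hu : MemLp u 2 μ) (hv : MemLp v 2 μ) : Integrable (fun x => ⟪u x, v x⟫) μ :=
  (hu.norm.integrable_mul hv.norm).mono' (hu.1.inner hv.1)
    (Eventually.of_forall fun _ => norm_inner_le_norm _ _)

namespace IsIndefiniteIntegral

variable [CompleteSpace E]

lemma norm_sq (hf : IsIndefiniteIntegral f f') :
    IsIndefiniteIntegral (fun x => ‖f x‖ ^ 2) (fun x => 2 * ⟪f x, f' x⟫) := by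
  refine isIndefiniteIntegral_of_absolutelyContinuous (fun a b => ?_)
    (hf.ae_hasDerivAt.mono fun _ hx => hx.norm_sq)
  have hnorm : AbsolutelyContinuousOnInterval (fun x => ‖f x‖) a b :=
    absolutelyContinuousOnInterval_of_dist_le (hf.absolutelyContinuousOnInterval a b)
      fun x y => by simpa only [dist_eq_norm] using dist_norm_norm_le (f x) (f y)
  simpa only [sq, Pi.mul_def] using hnorm.mul hnorm

lemma integrable_norm_pow_four (hf : IsIndefiniteIntegral f f') (hf2 : MemLp f 2)
    (hf'2 : MemLp f' 2) :
    Integrable fun x => ‖f x‖ ^ 4 := by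
  obtain ⟨C, hC⟩ := hf.norm_sq.exists_norm_le
    ((integrable_inner_of_memLp_two hf2 hf'2).const_mul 2)
  have hmul := hf2.norm.integrable_sq.bdd_mul hf.norm_sq.continuous.aestronglyMeasurable
    (Eventually.of_forall hC)
  exact hmul.congr (Eventually.of_forall fun x => by ring)

lemma two_mul_integral_centeredPrimitive_mul_inner (hf : IsIndefiniteIntegral f f')
    (hf2 : MemLp f 2) (hf'2 : MemLp f' 2) :
    2 * ∫ x, centeredPrimitive (fun y => ‖f y‖ ^ 2) x * ⟪f x, f' x⟫ = -∫ x, ‖f x‖ ^ 4 := by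
  set F := centeredPrimitive fun y => ‖f y‖ ^ 2
  have hρ : Integrable fun y => ‖f y‖ ^ 2 := hf2.norm.integrable_sq
  have hFinner : Integrable fun x => 2 * (F x * ⟪f x, f' x⟫) :=
    (integrable_centeredPrimitive_mul hρ (integrable_inner_of_memLp_two hf2 hf'2)).const_mul 2
  have hpow := hf.integrable_norm_pow_four hf2 hf'2
  have hprod : IsIndefiniteIntegral (fun x => F x * ‖f x‖ ^ 2)
      (fun x => ‖f x‖ ^ 4 + 2 * (F x * ⟪f x, f' x⟫)) := by
    convert (isIndefiniteIntegral_centeredPrimitive hρ).mul hf.norm_sq using 2 with x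
    ring
  have hzero := hprod.integral_eq_zero (integrable_centeredPrimitive_mul hρ hρ)
    (hpow.add hFinner)
  rw [integral_add hpow hFinner, integral_const_mul] at hzero
  linarith

lemma integral_norm_add_centeredPrimitive_smul_sq (hf : IsIndefiniteIntegral f f')
    (hf2 : MemLp f 2) (hf'2 : MemLp f' 2) (κ : ℝ) :
    ∫ x, ‖f' x + (κ * centeredPrimitive (fun y => ‖f y‖ ^ 2) x) • f x‖ ^ 2 =
      (∫ x, ‖f' x‖ ^ 2) - κ * (∫ x, ‖f x‖ ^ 4) + κ ^ 2 * ((∫ x, ‖f x‖ ^ 2) ^ 3 / 12) := by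
  set F := centeredPrimitive fun y => ‖f y‖ ^ 2
  have hρ : Integrable fun y => ‖f y‖ ^ 2 := hf2.norm.integrable_sq
  have hf'i : Integrable fun x => ‖f' x‖ ^ 2 := hf'2.norm.integrable_sq
  have hcross : Integrable fun x => 2 * κ * (F x * ⟪f x, f' x⟫) :=
    (integrable_centeredPrimitive_mul hρ (integrable_inner_of_memLp_two hf2 hf'2)).const_mul _
  have hFsq : Integrable fun x => κ ^ 2 * (F x ^ 2 * ‖f x‖ ^ 2) :=
    (integrable_centeredPrimitive_sq_mul hρ).const_mul _
  have hsquare (x : ℝ) : ‖f' x + (κ * F x) • f x‖ ^ 2 =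
      ‖f' x‖ ^ 2 + 2 * κ * (F x * ⟪f x, f' x⟫) + κ ^ 2 * (F x ^ 2 * ‖f x‖ ^ 2) := by
    rw [norm_add_sq_real, real_inner_smul_right, real_inner_comm, norm_smul, mul_pow,
      Real.norm_eq_abs, sq_abs]
    ring
  simp only [hsquare]
  rw [integral_add (by exact hf'i.add hcross) hFsq, integral_add hf'i hcross, integral_const_mul,
    integral_const_mul, integral_centeredPrimitive_sq_mul hρ hf.norm_sq.continuous]
  linear_combination κ * hf.two_mul_integral_centeredPrimitive_mul_inner hf2 hf'2

lemma mul_integral_norm_pow_four_le (hf : IsIndefiniteIntegral f f') (hf2 : MemLp f 2)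
    (hf'2 : MemLp f' 2) (κ : ℝ) :
    κ * ∫ x, ‖f x‖ ^ 4 ≤ (∫ x, ‖f' x‖ ^ 2) + κ ^ 2 * ((∫ x, ‖f x‖ ^ 2) ^ 3 / 12) := by
  have hnonneg : 0 ≤ ∫ x, ‖f' x + (κ * centeredPrimitive (fun y => ‖f y‖ ^ 2) x) • f x‖ ^ 2 :=
    integral_nonneg fun _ => by positivity
  rw [hf.integral_norm_add_centeredPrimitive_smul_sq hf2 hf'2] at hnonneg
  linarith

end IsIndefiniteIntegral

end GagliardoNirenberg

namespace H1PairC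

variable {ψ ψ' : ℝ → ℂ}

lemma locallyIntegrable (h : H1PairC ψ ψ') (hψ : ψ ≠ 0) : LocallyIntegrable ψ' := by
  obtain ⟨hcont, hsq, -, hsub⟩ := h
  contrapose! hψ
  simp only [LocallyIntegrable, not_forall] at hψ
  obtain ⟨p, hp⟩ := hψ
  have hjump {a b : ℝ} (ha : a < p) (hb : p < b) : ψ b = ψ a := by
    -- The integral of `ψ'` over `[a, b]` is undefined, hence `0` by convention.
    have hnot : ¬IntervalIntegrable ψ' volume a b := fun hint =>
      hp ⟨_, Ioc_mem_nhds ha hb,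
        (intervalIntegrable_iff_integrableOn_Ioc_of_le (ha.trans hb).le).1 hint⟩
    rw [← sub_eq_zero, hsub a b (ha.trans hb).le, intervalIntegral.integral_undef hnot]
  have hbelow (a : ℝ) (ha : a < p) : ψ a = ψ (p + 1) := (hjump ha (lt_add_one p)).symm
  have hconst : ψ = fun _ => ψ (p + 1) := by
    refine hcont.ext_on (dense_compl_singleton p) continuous_const fun x hx => ?_
    rcases lt_or_gt_of_ne hx with hlt | hgt
    · exact hbelow x hlt
    · exact (hjump (sub_one_lt p) hgt).trans (hbelow _ (sub_one_lt p))
  rw [hconst] at hsq ⊢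
  have hzero : ψ (p + 1) = 0 := by
    simpa [integrable_const_iff, isFiniteMeasure_iff] using hsq
  exact funext fun _ => hzero

lemma isIndefiniteIntegral (h : H1PairC ψ ψ') (hψ : ψ ≠ 0) : IsIndefiniteIntegral ψ ψ' where
  locallyIntegrable := h.locallyIntegrable hψ
  sub_eq_integral a b := by
    rcases le_total a b with hab | hba
    · exact h.2.2.2 a b hab
    · rw [intervalIntegral.integral_symm, ← h.2.2.2 b a hba, neg_sub]

lemma memLp_two (h : H1PairC ψ ψ') : MemLp ψ 2 :=
  (memLp_two_iff_integrable_sq_norm h.1.aestronglyMeasurable).2 h.2.1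

lemma memLp_two_deriv (h : H1PairC ψ ψ') (hψ : ψ ≠ 0) : MemLp ψ' 2 :=
  (memLp_two_iff_integrable_sq_norm (h.locallyIntegrable hψ).aestronglyMeasurable).2 h.2.2.1

lemma integrable_norm_pow_four (h : H1PairC ψ ψ') : Integrable fun x => ‖ψ x‖ ^ 4 := by
  rcases eq_or_ne ψ 0 with rfl | hψ
  · simp
  · exact (h.isIndefiniteIntegral hψ).integrable_norm_pow_four h.memLp_two (h.memLp_two_deriv hψ)

lemma mul_integral_norm_pow_four_le (h : H1PairC ψ ψ') (κ : ℝ) :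
    κ * ∫ x, ‖ψ x‖ ^ 4 ≤ (∫ x, ‖ψ' x‖ ^ 2) + κ ^ 2 * ((∫ x, ‖ψ x‖ ^ 2) ^ 3 / 12) := by
  rcases eq_or_ne ψ 0 with rfl | hψ
  · simpa using integral_nonneg fun x => sq_nonneg ‖ψ' x‖
  · exact (h.isIndefiniteIntegral hψ).mul_integral_norm_pow_four_le h.memLp_two
      (h.memLp_two_deriv hψ) κ

lemma ENLS_eq (h : H1PairC ψ ψ') (g₂ A : ℝ) :
    ENLS g₂ A ψ ψ' = g₂ / 8 * (∫ x, ‖ψ' x‖ ^ 2) + 3 / 8 * A * ∫ x, ‖ψ x‖ ^ 4 := by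
  rw [ENLS, integral_add (h.2.2.1.const_mul _) (h.integrable_norm_pow_four.const_mul _),
    integral_const_mul, integral_const_mul]

lemma le_ENLS (h : H1PairC ψ ψ') {g₂ : ℝ} (hg₂ : 0 < g₂) (A : ℝ) :
    -(3 * A ^ 2 * (∫ x, ‖ψ x‖ ^ 2) ^ 3 / (32 * g₂)) ≤ ENLS g₂ A ψ ψ' := by
  have hGN := mul_le_mul_of_nonneg_left (h.mul_integral_norm_pow_four_le (-3 * A / g₂))
    (div_pos hg₂ (by norm_num : (0 : ℝ) < 8)).le
  rw [h.ENLS_eq]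
  field_simp at hGN ⊢
  linarith

end H1PairC

section Sech

lemma sech_sq (x : ℝ) : sech x ^ 2 = 1 - Real.tanh x ^ 2 := by
  have hcosh := (Real.cosh_pos x).ne'
  rw [sech, Real.tanh_eq_sinh_div_cosh]
  field_simp
  linarith [Real.cosh_sq x]

lemma hasDerivAt_sech (x : ℝ) : HasDerivAt sech (-(Real.tanh x * sech x)) x := by
  have hcosh := (Real.cosh_pos x).ne'
  refine ((hasDerivAt_const x (1 : ℝ)).div (Real.hasDerivAt_cosh x) hcosh).congr_deriv ?_
  rw [sech, Real.tanh_eq_sinh_div_cosh]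
  field_simp
  ring

lemma hasDerivAt_tanh (x : ℝ) : HasDerivAt Real.tanh (sech x ^ 2) x := by
  have hcosh := (Real.cosh_pos x).ne'
  rw [funext Real.tanh_eq_sinh_div_cosh]
  refine ((Real.hasDerivAt_sinh x).div (Real.hasDerivAt_cosh x) hcosh).congr_deriv ?_
  rw [sech, ← sq, ← sq, Real.cosh_sq_sub_sinh_sq, div_pow, one_pow]

lemma continuous_sech : Continuous sech :=
  continuous_iff_continuousAt.2 fun x => (hasDerivAt_sech x).continuousAt

lemma continuous_tanh : Continuous Real.tanh :=
  continuous_iff_continuousAt.2 fun x => (hasDerivAt_tanh x).continuousAt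

lemma one_sub_exp_neg_le_tanh (x : ℝ) : 1 - Real.exp (-x) ≤ Real.tanh x := by
  rw [Real.tanh_eq_sinh_div_cosh, le_div_iff₀ (Real.cosh_pos x)]
  nlinarith [Real.cosh_sub_sinh x, Real.one_le_cosh x, Real.exp_pos (-x)]

lemma tendsto_tanh_atTop : Tendsto Real.tanh atTop (𝓝 1) := by
  have hlower : Tendsto (fun x => 1 - Real.exp (-x)) atTop (𝓝 1) := by
    simpa only [sub_zero] using Real.tendsto_exp_neg_atTop_nhds_zero.const_sub 1
  exact tendsto_of_tendsto_of_tendsto_of_le_of_le hlower tendsto_const_nhds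
    one_sub_exp_neg_le_tanh fun x => (Real.tanh_lt_one x).le

lemma tendsto_tanh_atBot : Tendsto Real.tanh atBot (𝓝 (-1)) := by
  simpa [comp_def] using (tendsto_tanh_atTop.comp tendsto_neg_atBot_atTop).neg

lemma sech_sq_le_inv_one_add_sq (x : ℝ) : sech x ^ 2 ≤ (1 + x ^ 2)⁻¹ := by
  have hsinh : x ^ 2 ≤ Real.sinh x ^ 2 :=
    sq_le_sq.2 (Real.abs_sinh x ▸ Real.self_le_sinh_iff.2 (abs_nonneg x))
  rw [sech, div_pow, one_pow, one_div, Real.cosh_sq, add_comm 1]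
  gcongr

lemma integrable_sech_sq : Integrable fun x => sech x ^ 2 :=
  integrable_inv_one_add_sq.mono' (continuous_sech.pow 2).aestronglyMeasurable
    (Eventually.of_forall fun x => by
      simpa only [norm_pow, Real.norm_eq_abs, sq_abs] using sech_sq_le_inv_one_add_sq x)

lemma integrable_tanh_pow_mul_sech_sq (n : ℕ) :
    Integrable fun x => Real.tanh x ^ n * sech x ^ 2 := by
  refine integrable_sech_sq.bdd_mul (c := 1) (continuous_tanh.pow n).aestronglyMeasurable
    (Eventually.of_forall fun x => ?_)
  rw [norm_pow]
  exact pow_le_one₀ (norm_nonneg _) (Real.abs_tanh_lt_one x).le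

lemma integral_tanh_pow_mul_sech_sq (n : ℕ) :
    ∫ x, Real.tanh x ^ n * sech x ^ 2 = (1 - (-1) ^ (n + 1)) / (n + 1) := by
  have hderiv (x : ℝ) : HasDerivAt (fun y => Real.tanh y ^ (n + 1) / (n + 1))
      (Real.tanh x ^ n * sech x ^ 2) x := by
    refine (((hasDerivAt_tanh x).pow (n + 1)).div_const _).congr_deriv ?_
    push_cast
    field_simp
  rw [integral_of_hasDerivAt_of_tendsto hderiv (integrable_tanh_pow_mul_sech_sq n)
    ((tendsto_tanh_atBot.pow _).div_const _) ((tendsto_tanh_atTop.pow _).div_const _), one_pow,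
    sub_div]

lemma integral_sech_sq : ∫ x, sech x ^ 2 = 2 := by
  have h := integral_tanh_pow_mul_sech_sq 0
  norm_num at h
  exact h

lemma integral_tanh_sq_mul_sech_sq : ∫ x, Real.tanh x ^ 2 * sech x ^ 2 = 2 / 3 := by
  rw [integral_tanh_pow_mul_sech_sq]
  norm_num

lemma integral_sech_pow_four : ∫ x, sech x ^ 4 = 4 / 3 := by
  have hsplit (x : ℝ) : sech x ^ 4 = sech x ^ 2 - Real.tanh x ^ 2 * sech x ^ 2 := by
    linear_combination sech x ^ 2 * sech_sq x
  simp only [hsplit]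
  rw [integral_sub integrable_sech_sq (integrable_tanh_pow_mul_sech_sq 2), integral_sech_sq,
    integral_tanh_sq_mul_sech_sq]
  norm_num

end Sech

section Soliton

/-- The soliton `α √κ sech (κ α x)`, a solution of `φ' = -κ F φ` where `F` is the
`centeredPrimitive` of `φ²`. The profile `φ_NLS` is the case `κ = -3A/g₂`. -/
noncomputable def soliton (κ α x : ℝ) : ℂ := ((α * √κ * sech (κ * α * x) : ℝ) : ℂ)

variable {κ α : ℝ}

lemma hasDerivAt_soliton (κ α x : ℝ) : HasDerivAt (soliton κ α)
    ((-(κ * α ^ 2 * √κ * (Real.tanh (κ * α * x) * sech (κ * α * x))) : ℝ) : ℂ) x := by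
  have hscale : HasDerivAt (fun y => κ * α * y) (κ * α) x := by
    simpa using (hasDerivAt_id x).const_mul (κ * α)
  have hreal := ((hasDerivAt_sech (κ * α * x)).comp x hscale).const_mul (α * √κ)
  exact (hreal.congr_deriv (by ring)).ofReal_comp

lemma deriv_soliton (κ α : ℝ) : deriv (soliton κ α) = fun x =>
    ((-(κ * α ^ 2 * √κ * (Real.tanh (κ * α * x) * sech (κ * α * x))) : ℝ) : ℂ) :=
  funext fun x => (hasDerivAt_soliton κ α x).deriv

lemma norm_soliton_sq (hκ : 0 ≤ κ) (α x : ℝ) :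
    ‖soliton κ α x‖ ^ 2 = κ * α ^ 2 * sech (κ * α * x) ^ 2 := by
  rw [soliton, Complex.norm_real, Real.norm_eq_abs, sq_abs, mul_pow, mul_pow, Real.sq_sqrt hκ]
  ring

lemma norm_soliton_pow_four (hκ : 0 ≤ κ) (α x : ℝ) :
    ‖soliton κ α x‖ ^ 4 = κ ^ 2 * α ^ 4 * sech (κ * α * x) ^ 4 := by
  rw [show ‖soliton κ α x‖ ^ 4 = (‖soliton κ α x‖ ^ 2) ^ 2 by ring, norm_soliton_sq hκ]
  ring

lemma norm_deriv_soliton_sq (hκ : 0 ≤ κ) (α x : ℝ) : ‖deriv (soliton κ α) x‖ ^ 2 =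
    κ ^ 3 * α ^ 4 * (Real.tanh (κ * α * x) ^ 2 * sech (κ * α * x) ^ 2) := by
  rw [deriv_soliton, Complex.norm_real, Real.norm_eq_abs, sq_abs, neg_sq, mul_pow, mul_pow _ √κ,
    Real.sq_sqrt hκ]
  ring

lemma h1PairC_soliton (hκ : 0 < κ) (hα : 0 < α) :
    H1PairC (soliton κ α) (deriv (soliton κ α)) := by
  have hscale : κ * α ≠ 0 := (mul_pos hκ hα).ne'
  refine ⟨continuous_iff_continuousAt.2 fun x => (hasDerivAt_soliton κ α x).continuousAt,
    ?_, ?_, fun a b _ => ?_⟩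
  · simp only [norm_soliton_sq hκ.le]
    exact (integrable_sech_sq.comp_mul_left' hscale).const_mul _
  · simp only [norm_deriv_soliton_sq hκ.le]
    exact ((integrable_tanh_pow_mul_sech_sq 2).comp_mul_left' hscale).const_mul _
  · have hcont : Continuous (deriv (soliton κ α)) := by
      have := continuous_sech
      have := continuous_tanh
      rw [deriv_soliton]
      fun_prop
    exact (intervalIntegral.integral_deriv_eq_sub
      (fun x _ => (hasDerivAt_soliton κ α x).differentiableAt)
      (hcont.intervalIntegrable a b)).symm

lemma integral_norm_soliton_sq (hκ : 0 < κ) (hα : 0 < α) :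
    ∫ x, ‖soliton κ α x‖ ^ 2 = 2 * α := by
  simp only [norm_soliton_sq hκ.le]
  rw [integral_const_mul, Measure.integral_comp_mul_left (fun y => sech y ^ 2), integral_sech_sq,
    abs_of_pos (inv_pos.2 (mul_pos hκ hα)), smul_eq_mul]
  field_simp

lemma integral_norm_soliton_pow_four (hκ : 0 < κ) (hα : 0 < α) :
    ∫ x, ‖soliton κ α x‖ ^ 4 = 4 / 3 * κ * α ^ 3 := by
  simp only [norm_soliton_pow_four hκ.le]
  rw [integral_const_mul, Measure.integral_comp_mul_left (fun y => sech y ^ 4),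
    integral_sech_pow_four, abs_of_pos (inv_pos.2 (mul_pos hκ hα)), smul_eq_mul]
  field_simp

lemma integral_norm_deriv_soliton_sq (hκ : 0 < κ) (hα : 0 < α) :
    ∫ x, ‖deriv (soliton κ α) x‖ ^ 2 = 2 / 3 * κ ^ 2 * α ^ 3 := by
  simp only [norm_deriv_soliton_sq hκ.le]
  rw [integral_const_mul, Measure.integral_comp_mul_left (fun y => Real.tanh y ^ 2 * sech y ^ 2),
    integral_tanh_sq_mul_sech_sq, abs_of_pos (inv_pos.2 (mul_pos hκ hα)), smul_eq_mul]
  field_simp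

lemma ENLS_soliton (hκ : 0 < κ) (hα : 0 < α) (g₂ A : ℝ) :
    ENLS g₂ A (soliton κ α) (deriv (soliton κ α)) =
      g₂ / 12 * κ ^ 2 * α ^ 3 + A / 2 * κ * α ^ 3 := by
  rw [(h1PairC_soliton hκ hα).ENLS_eq, integral_norm_deriv_soliton_sq hκ hα,
    integral_norm_soliton_pow_four hκ hα]
  ring

end Soliton

theorem stmt5 (g₂ A α : ℝ) (hg₂ : 0 < g₂) (hA : A < 0) (hα : 0 < α)
    (cN : ℝ) (hcN : cN = -3 * α ^ 3 * A ^ 2 / (4 * g₂))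
    (ψK : ℝ → ℂ)
    (hψK : ∀ x : ℝ,
      ψK x = ((α * Real.sqrt (-3 * A / g₂) * sech (-3 * α * A * x / g₂) : ℝ) : ℂ)) :
    H1PairC ψK (deriv ψK) ∧ (∫ x : ℝ, ‖ψK x‖ ^ 2) = 2 * α ∧
      ENLS g₂ A ψK (deriv ψK) = cN ∧
      ∀ ψ ψ' : ℝ → ℂ, H1PairC ψ ψ' → (∫ x : ℝ, ‖ψ x‖ ^ 2) = 2 * α →
        cN ≤ ENLS g₂ A ψ ψ' := by
  have hκ : 0 < -3 * A / g₂ := div_pos (by linarith) hg₂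
  obtain rfl : ψK = soliton (-3 * A / g₂) α := by
    ext x
    rw [hψK, soliton, show -3 * α * A * x / g₂ = -3 * A / g₂ * α * x by ring]
  refine ⟨h1PairC_soliton hκ hα, integral_norm_soliton_sq hκ hα, ?_, fun ψ ψ' hψ hmass => ?_⟩
  · rw [ENLS_soliton hκ hα, hcN]
    field_simp
    ring
  · calc cN = -(3 * A ^ 2 * (∫ x, ‖ψ x‖ ^ 2) ^ 3 / (32 * g₂)) := by
          rw [hcN, hmass]
          field_simp
          ring
      _ ≤ ENLS g₂ A ψ ψ' := hψ.le_ENLS hg₂ A
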